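/- Let M be a Coxeter matrix on a finite set S with at least 2 elements such that for all s ≠ t one has M s t ≥ 3 and M s t ≠ 0 (large type and free of infinity), and such that there are no three pairwise distinct s, t, u ∈ S with M s t = M t u = M s u = 3 (hyperbolic type). Then the Artin group A[M] has property R_∞. -/

import Mathlib

/-!
Suppose that a finite-index subgroup of `G` maps onto a free group of rank two, so that a
finite-index characteristic subgroup `K` of `G` maps onto the alternating group of prime degree `p`
for all large `p`. Twisted conjugacy classes are counted in such quotients. If `G` had finitely many
of them, then so would `K`, and the classes avoiding some finite-index subgroup would all avoid a
common one, `J`. But for large `p` the quotient of `K` detects an element of `J` whose class avoids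
a finite-index subgroup: no automorphism `α` of the alternating group of odd degree
makes `x ↦ x * (α x)⁻¹` bijective, because `α` fixes the conjugacy class of a `q`-cycle, where
`p / 2 < q ≤ p - 2` is prime.

The Artin group has such a free quotient. With two generators, it maps onto a free product of two
finite cyclic groups. With three, its generators act as reflections for the matrix with entries
`-2 * cos (π / M s t)`, and reducing the coefficients modulo an ideal gives an action of a finite
group `Q` generated by involutions. The product of the reflections `s` and `t * u * t⁻¹` has
infinite order over `ℝ`, and the ideal can be chosen such that in `Q` its order divides none of the
finite labels.
A homomorphism to the wreath product of a free group with `Q` lying over this action sends `s` to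
the function `x ↦ β (x⁻¹ * s * x)`, and it exists as soon as `β y` and `β z` commute whenever the
order of `y * z` divides a label; so `β` may take free generators as values at those two
reflections, and the images of `s ^ 2` and `t * u ^ 2 * t⁻¹` do not commute.
-/

/-- Two elements `g h` of a group `G` are `φ`-twisted conjugate if there is `x : G`
with `h = x * g * (φ x)⁻¹`. -/
def TwistedConj {G : Type*} [Group G] (φ : G ≃* G) (g h : G) : Prop :=
  ∃ x : G, h = x * g * (φ x)⁻¹

/-- `R(φ) = ∞`: the set of `φ`-twisted conjugacy classes is infinite. -/
def ReidemeisterInfinite {G : Type*} [Group G] (φ : G ≃* G) : Prop :=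
  Infinite (Quot (TwistedConj φ))

/-- A group `G` has property `R_∞` if `R(φ) = ∞` for every automorphism `φ` of `G`. -/
def PropertyRInfinity (G : Type*) [Group G] : Prop :=
  ∀ φ : G ≃* G, ReidemeisterInfinite φ

/-- `M` is a Coxeter matrix on `S`: symmetric, with `M s s = 1` and `M s t ≠ 1` off the
diagonal (the value `0` encodes the label `∞`). -/
def IsCoxeterMatrix {S : Type*} (M : S → S → ℕ) : Prop :=
  (∀ s t, M s t = M t s) ∧ (∀ s, M s s = 1) ∧ (∀ s t, s ≠ t → M s t ≠ 1)

/-- The alternating word `Π(s,t,m) = s t s t ⋯` of length `m`, as an element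
of the free group. -/
def altWord {S : Type*} (s t : S) (m : ℕ) : FreeGroup S :=
  ((List.range m).map (fun k => if k % 2 = 0 then FreeGroup.of s else FreeGroup.of t)).prod

/-- The Artin relations associated with a Coxeter matrix `M`: for every pair `s ≠ t`
with `M s t = m ≥ 2` the relation `Π(s,t,m) = Π(t,s,m)`; pairs with `M s t = 0`
contribute no relation. -/
def artinRels {S : Type*} (M : S → S → ℕ) : Set (FreeGroup S) :=
  { r | ∃ s t : S, s ≠ t ∧ 2 ≤ M s t ∧
      r = altWord s t (M s t) * (altWord t s (M s t))⁻¹ }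

/-- The Artin group of the Coxeter matrix `M`. -/
abbrev ArtinGroup {S : Type*} (M : S → S → ℕ) : Type _ := PresentedGroup (artinRels M)

/-- The image `t_s` in the Artin group of the standard generator `s`. -/
abbrev artinGen {S : Type*} (M : S → S → ℕ) (s : S) : ArtinGroup M :=
  PresentedGroup.of (rels := artinRels M) s

theorem twistedConj_equivalence {G : Type*} [Group G] (φ : G ≃* G) :
    Equivalence (TwistedConj φ) where
  refl g := ⟨1, by simp⟩
  symm := by
    rintro g _ ⟨x, rfl⟩
    exact ⟨x⁻¹, by simp [mul_assoc]⟩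
  trans := by
    rintro g _ _ ⟨x, rfl⟩ ⟨y, rfl⟩
    exact ⟨y * x, by simp [mul_assoc]⟩

/- The `ψ`-class of `k = x⁻¹ * g * φ x`, where `g` represents the `φ`-class of `k`, depends only on
`g` and on the coset `x * K`. -/
theorem ReidemeisterInfinite.of_finiteIndex {G : Type*} [Group G] {K : Subgroup G}
    [K.FiniteIndex] {φ : G ≃* G} {ψ : K ≃* K} (hψ : ∀ k, (ψ k : G) = φ k)
    (h : ReidemeisterInfinite ψ) : ReidemeisterInfinite φ := by
  rw [ReidemeisterInfinite, ← not_finite_iff_infinite] at h ⊢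
  refine fun _ ↦ h ?_
  have exists_eq (k : K) : ∃ x : G, (k : G) = x⁻¹ * (Quot.mk (TwistedConj φ) k).out * φ x := by
    obtain ⟨x, hx⟩ := ((twistedConj_equivalence φ).quot_mk_eq_iff _ _).mp
      (Quot.out_eq (Quot.mk (TwistedConj φ) (k : G)))
    exact ⟨x⁻¹, by simpa using hx⟩
  choose x hx using exists_eq
  refine Finite.of_injective
    (fun c : Quot (TwistedConj ψ) ↦ (Quot.mk (TwistedConj φ) c.out, (x c.out : G ⧸ K))) ?_
  intro c d hcd
  obtain ⟨hclass, hcoset⟩ := Prod.ext_iff.mp hcd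
  rw [← c.out_eq, ← d.out_eq]
  refine Quot.sound ⟨⟨(x d.out)⁻¹ * x c.out, QuotientGroup.eq.mp hcoset.symm⟩, ?_⟩
  ext
  dsimp only at hclass
  simp only [Subgroup.coe_mul, Subgroup.coe_inv, hψ, map_mul, map_inv]
  rw [hx c.out, hclass]
  nth_rw 1 [hx d.out]
  group

theorem PropertyRInfinity.of_characteristic {G : Type*} [Group G] (K : Subgroup G)
    [hK : K.Characteristic] [K.FiniteIndex] (h : PropertyRInfinity K) : PropertyRInfinity G :=
  fun φ ↦ (h ((φ.subgroupMap K).trans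
    (MulEquiv.subgroupCongr (Subgroup.characteristic_iff_map_eq.mp hK φ)))).of_finiteIndex
    fun _ ↦ rfl

theorem reidemeisterInfinite_of_forall_finiteIndex {G : Type*} [Group G] {φ : G ≃* G}
    (h : ∀ J : Subgroup G, J.FiniteIndex →
      ∃ g ∈ J, ∃ V : Subgroup G, V.FiniteIndex ∧ ∀ v ∈ V, ¬ TwistedConj φ g v) :
    ReidemeisterInfinite φ := by
  rw [ReidemeisterInfinite, ← not_finite_iff_infinite]
  intro _
  let avoided := {c : Quot (TwistedConj φ) //
    ∃ V : Subgroup G, V.FiniteIndex ∧ ∀ v ∈ V, Quot.mk (TwistedConj φ) v ≠ c}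
  choose V hV hdisj using fun c : avoided ↦ c.2
  obtain ⟨g, hgV, W, hW, hgW⟩ := h (⨅ c, V c) (Subgroup.finiteIndex_iInf hV)
  have g_avoided : ∀ w ∈ W, Quot.mk (TwistedConj φ) w ≠ Quot.mk _ g := fun w hw hwg ↦
    hgW w hw (((twistedConj_equivalence φ).quot_mk_eq_iff _ _).mp hwg.symm)
  exact hdisj ⟨Quot.mk _ g, W, hW, g_avoided⟩ g (Subgroup.mem_iInf.mp hgV _) rfl

section FiniteQuotients

variable {G B : Type*} [Group G] [Group B]

theorem map_eq_top_of_not_le_ker [IsSimpleGroup B] {f : G →* B} (hf : Function.Surjective f)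
    {J : Subgroup G} [hJ : J.Normal] (hJf : ¬ J ≤ f.ker) : J.map f = ⊤ :=
  (hJ.map f hf).eq_bot_or_eq_top.resolve_left fun h ↦ hJf ((J.map_eq_bot_iff).mp h)

theorem map_eq_top_of_index_lt [IsSimpleGroup B] {f : G →* B} (hf : Function.Surjective f)
    {J : Subgroup G} [J.Normal] [hJ : J.FiniteIndex] (hJB : J.index < Nat.card B) :
    J.map f = ⊤ := by
  refine map_eq_top_of_not_le_ker hf fun hle ↦ hJB.not_ge ?_
  rw [← Nat.card_congr (QuotientGroup.quotientKerEquivOfSurjective f hf).toEquiv]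
  exact Nat.le_of_dvd (Nat.pos_of_ne_zero hJ.index_ne_zero) (Subgroup.index_dvd_of_le hle)

theorem map_inf_eq_top_of_commutator_eq_top (hB : commutator B = ⊤) (f : G →* B)
    {J₁ J₂ : Subgroup G} [J₁.Normal] [J₂.Normal] (h₁ : J₁.map f = ⊤) (h₂ : J₂.map f = ⊤) :
    (J₁ ⊓ J₂).map f = ⊤ := by
  rw [eq_top_iff, ← hB, commutator_def]
  nth_rw 1 [← h₁]
  rw [← h₂, ← Subgroup.map_commutator]
  exact Subgroup.map_mono (Subgroup.commutator_le_inf J₁ J₂)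

theorem map_biInf_eq_top_of_commutator_eq_top (hB : commutator B = ⊤) {f : G →* B}
    (hf : Function.Surjective f) {ι : Type*} (s : Finset ι) {J : ι → Subgroup G}
    (hJ : ∀ i, (J i).Normal) (hJf : ∀ i ∈ s, (J i).map f = ⊤) :
    (⨅ i ∈ s, J i).map f = ⊤ := by
  classical
  induction s using Finset.induction_on with
  | empty => simpa [← MonoidHom.range_eq_map] using f.range_eq_top.mpr hf
  | insert i s _ ih =>
    rw [Finset.iInf_insert]
    have : (⨅ i ∈ s, J i).Normal :=
      Subgroup.normal_iInf_normal fun i ↦ Subgroup.normal_iInf_normal fun _ ↦ hJ i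
    exact map_inf_eq_top_of_commutator_eq_top hB f (hJf i (Finset.mem_insert_self i s))
      (ih fun j hj ↦ hJf j (Finset.mem_insert_of_mem hj))

theorem exists_mulEquiv_comp_eq_of_ker_le [Finite B] {f f' : G →* B}
    (hf : Function.Surjective f) (hf' : Function.Surjective f') (hker : f'.ker ≤ f.ker) :
    ∃ α : B ≃* B, ∀ x, α (f' x) = f x := by
  let β : B →* B := f'.liftOfSurjective hf' ⟨f, hker⟩
  have β_comp (x : G) : β (f' x) = f x := f'.liftOfRightInverse_comp_apply _ _ ⟨f, hker⟩ x
  have β_surj : Function.Surjective β := fun b ↦ by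
    obtain ⟨x, rfl⟩ := hf b
    exact ⟨f' x, β_comp x⟩
  exact ⟨.ofBijective β β_surj.bijective_of_finite, β_comp⟩

instance finite_monoidHom [Group.FG G] [Finite B] : Finite (G →* B) := by
  obtain ⟨s, hs, hfin⟩ := Group.fg_iff.mp ‹Group.FG G›
  have := hfin.to_subtype
  refine Finite.of_injective (fun (f : G →* B) (x : s) ↦ f x) fun f g hfg ↦ ?_
  exact MonoidHom.eq_of_eqOn_dense hs fun x hx ↦ congrFun hfg ⟨x, hx⟩

theorem exists_pos_comp_pow_eq [Group.FG G] [Finite B] (ψ : MulAut G) (f : G →* B) :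
    ∃ n > 0, f.comp (ψ ^ n).toMonoidHom = f := by
  let T (h : G →* B) : G →* B := h.comp ψ.toMonoidHom
  have T_iterate (n : ℕ) : T^[n] f = f.comp (ψ ^ n).toMonoidHom := by
    induction n with
    | zero => rfl
    | succ n ih => rw [Function.iterate_succ_apply', ih, pow_succ]; rfl
  have T_injective : Function.Injective T := fun h h' hhh' ↦ by
    ext x
    simpa [T] using DFunLike.congr_fun hhh' (ψ.symm x)
  obtain ⟨n, hn, hperiod⟩ := T_injective.mem_periodicPts f
  exact ⟨n, hn, (T_iterate n).symm.trans hperiod⟩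

theorem exists_pos_comp_pow_eq_mulEquiv_comp [Group.FG G] [Finite B] [IsSimpleGroup B]
    {f : G →* B} (hf : Function.Surjective f) (ψ : MulAut G) :
    ∃ L > 0, (∃ α : B ≃* B, ∀ x, f ((ψ ^ L) x) = α (f x)) ∧
      ∀ j ∈ Finset.Ioo 0 L, (f.comp (ψ ^ j).toMonoidHom).ker.map f = ⊤ := by
  classical
  have hex : ∃ L > 0, (f.comp (ψ ^ L).toMonoidHom).ker ≤ f.ker := by
    obtain ⟨n, hn, hperiod⟩ := exists_pos_comp_pow_eq ψ f
    exact ⟨n, hn, (congrArg MonoidHom.ker hperiod).le⟩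
  obtain ⟨hL, hker⟩ := Nat.find_spec hex
  obtain ⟨α, hα⟩ :=
    exists_mulEquiv_comp_eq_of_ker_le (f' := f.comp (ψ ^ Nat.find hex).toMonoidHom) hf
      (hf.comp (ψ ^ Nat.find hex).surjective) hker
  refine ⟨Nat.find hex, hL, ⟨α.symm, fun x ↦ α.eq_symm_apply.mpr (hα x)⟩, fun j hj ↦ ?_⟩
  obtain ⟨hj₀, hjL⟩ := Finset.mem_Ioo.mp hj
  exact map_eq_top_of_not_le_ker hf fun hle ↦ Nat.find_min hex hjL ⟨hj₀, hle⟩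

/- With `L` and `α` as in the previous lemma, choose `g ∈ J` with `f g = b` and `f (ψ ^ j g) = 1`
for `0 < j < L`. If `x * g * (ψ x)⁻¹` lies in the kernels of all `f ∘ ψ ^ j` with `j < L`, then
`f (ψ x) = f (ψ ^ 2 x) = ⋯ = f (ψ ^ L x) = α (f x)`, hence `1 = f x * b * (α (f x))⁻¹`. -/
theorem exists_forall_mem_not_twistedConj [Group.FG G] [Finite B] [IsSimpleGroup B]
    (hB : commutator B = ⊤) (hα : ∀ α : B ≃* B, ∃ b, ¬ TwistedConj α 1 b) {f : G →* B}
    (hf : Function.Surjective f) (ψ : G ≃* G) {J : Subgroup G} [J.Normal] (hJ : J.map f = ⊤) :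
    ∃ g ∈ J, ∃ V : Subgroup G, V.FiniteIndex ∧ ∀ v ∈ V, ¬ TwistedConj ψ g v := by
  obtain ⟨L, hL, ⟨α, f_pow_L⟩, kers_onto⟩ := exists_pos_comp_pow_eq_mulEquiv_comp hf ψ
  let F (j : ℕ) : G →* B := f.comp (ψ ^ j : MulAut G).toMonoidHom
  have F_apply_ψ (j : ℕ) (x : G) : F j (ψ x) = F (j + 1) x := by simp [F, pow_succ]
  obtain ⟨b, hb⟩ := hα α
  have iInf_onto := map_biInf_eq_top_of_commutator_eq_top (J := fun j ↦ (F j).ker) hB hf _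
    (fun _ ↦ inferInstance) kers_onto
  have : (⨅ j ∈ Finset.Ioo 0 L, (F j).ker).Normal :=
    Subgroup.normal_iInf_normal fun _ ↦ Subgroup.normal_iInf_normal fun _ ↦ inferInstance
  obtain ⟨g, ⟨hgJ, hgF⟩, hgb⟩ : b ∈ (J ⊓ ⨅ j ∈ Finset.Ioo 0 L, (F j).ker).map f := by
    rw [map_inf_eq_top_of_commutator_eq_top hB f hJ iInf_onto]
    trivial
  have F_g (j : ℕ) (hj : j ∈ Finset.Ioo 0 L) : F j g = 1 := by
    simpa using Subgroup.mem_iInf.mp (Subgroup.mem_iInf.mp hgF j) hj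
  refine ⟨g, hgJ, ⨅ j : Fin L, (F j).ker, Subgroup.finiteIndex_iInf inferInstance, ?_⟩
  rintro _ hv ⟨x, rfl⟩
  have F_x_mul_F_g (j : ℕ) (hj : j < L) : F j x * F j g = F (j + 1) x := by
    have := Subgroup.mem_iInf.mp hv ⟨j, hj⟩
    rwa [MonoidHom.mem_ker, map_mul, map_mul, map_inv, mul_inv_eq_one, F_apply_ψ] at this
  have F_x_const (j : ℕ) (hj : j < L) : F (j + 1) x = F 1 x := by
    induction j with
    | zero => rfl
    | succ j ih =>
      rw [← ih (by omega), ← F_x_mul_F_g (j + 1) hj, F_g _ (by simp [hj]), mul_one]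
  have α_f_x : α (f x) = f x * b := calc
    α (f x) = F L x := (f_pow_L x).symm
    _ = F 1 x := by rw [← F_x_const (L - 1) (by omega), Nat.sub_add_cancel hL]
    _ = f x * b := by rw [← F_x_mul_F_g 0 hL, ← hgb]; rfl
  exact hb ⟨(f x)⁻¹, by simp [α_f_x]⟩

end FiniteQuotients

theorem exists_not_twistedConj_one_of_isConj {B : Type*} [Group B] [Finite B] {α : B ≃* B} {c : B}
    (hc : c ≠ 1) (h : IsConj c (α c)) : ∃ b, ¬ TwistedConj α 1 b := by
  by_contra! hsurj
  have injective : Function.Injective fun x ↦ x * 1 * (α x)⁻¹ :=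
    Finite.injective_iff_surjective.mpr fun b ↦ (hsurj b).imp fun _ ↦ Eq.symm
  obtain ⟨u, hu⟩ := isConj_iff.mp h
  obtain ⟨x, hx⟩ := hsurj u⁻¹
  have fixed : α (x⁻¹ * c * x) = x⁻¹ * c * x := by
    obtain rfl : u = α x * x⁻¹ := by simpa using congrArg (·⁻¹) hx
    rw [map_mul, map_mul, map_inv, ← hu]
    group
  have trivial : x⁻¹ * c * x = 1 :=
    injective (by simp only [fixed, map_one, mul_one, mul_inv_cancel])
  exact hc (conj_eq_one_iff.mp (by rwa [inv_inv] : x⁻¹ * c * x⁻¹⁻¹ = 1))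

theorem exists_prime_lt_two_mul_and_add_two_le {n : ℕ} (hodd : Odd n) (hn : 5 ≤ n) :
    ∃ q, q.Prime ∧ n < 2 * q ∧ q + 2 ≤ n := by
  obtain ⟨k, rfl⟩ := hodd
  obtain ⟨q, hq, hkq, hqk⟩ := Nat.exists_prime_lt_and_le_two_mul k (by omega)
  have : q ≠ 2 * k := fun h ↦ Nat.not_prime_mul (by norm_num) (by omega) (h ▸ hq)
  exact ⟨q, hq, by omega, by omega⟩

section Alternating

open Equiv Equiv.Perm

section Perm

variable {X : Type*} [Fintype X] [DecidableEq X]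

theorem dvd_card_alternatingGroup {q : ℕ} (hq : q.Prime) (hq2 : q ≠ 2)
    (hqX : q ≤ Fintype.card X) : q ∣ Nat.card (alternatingGroup X) := by
  have : Nontrivial X := Fintype.one_lt_card_iff_nontrivial.mp (hq.one_lt.trans_le hqX)
  have hdvd : q ∣ 2 * Nat.card (alternatingGroup X) := by
    rw [Nat.card_eq_fintype_card, two_mul_card_alternatingGroup, Fintype.card_perm]
    exact hq.dvd_factorial.mpr hqX
  exact ((Nat.coprime_primes hq Nat.prime_two).mpr hq2).dvd_of_dvd_mul_left hdvd

theorem card_le_card_alternatingGroup (hX : 3 ≤ Fintype.card X) :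
    Fintype.card X ≤ Nat.card (alternatingGroup X) := by
  have : Nontrivial X := Fintype.one_lt_card_iff_nontrivial.mp (by omega)
  have htwo : 2 * Nat.card (alternatingGroup X) =
      Fintype.card X * (Fintype.card X - 1).factorial := by
    rw [Nat.card_eq_fintype_card, two_mul_card_alternatingGroup, Fintype.card_perm,
      Nat.mul_factorial_pred (by omega)]
  have hfactorial : 2 ≤ (Fintype.card X - 1).factorial :=
    le_trans (by omega) (Nat.self_le_factorial _)
  nlinarith

/- A prime `q` with `card X < 2 * q ≤ 2 * (card X - 2)` divides the order of the alternating group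
and its elements of order `q` are `q`-cycles, which are all conjugate. -/
theorem exists_not_twistedConj_one_alternatingGroup (hodd : Odd (Fintype.card X))
    (hX : 5 ≤ Fintype.card X) (α : alternatingGroup X ≃* alternatingGroup X) :
    ∃ b, ¬ TwistedConj α 1 b := by
  obtain ⟨q, hq, hXq, hqX⟩ := exists_prime_lt_two_mul_and_add_two_le hodd hX
  have := Fact.mk hq
  obtain ⟨c, hc⟩ := exists_prime_orderOf_dvd_card' q
    (dvd_card_alternatingGroup (X := X) hq (by omega) (by omega))
  have isCycle {σ : alternatingGroup X} (hσ : orderOf σ = q) : (σ : Perm X).IsCycle := by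
    rw [← Subgroup.orderOf_coe] at hσ
    exact isCycle_of_prime_order' (hσ ▸ hq) (hσ ▸ hXq)
  have card_support {σ : alternatingGroup X} (hσ : orderOf σ = q) :
      (σ : Perm X).support.card = q := by
    rw [← (isCycle hσ).orderOf, Subgroup.orderOf_coe, hσ]
  have hαc : orderOf (α c) = q := by rw [MulEquiv.orderOf_eq, hc]
  refine exists_not_twistedConj_one_of_isConj (c := c) ?_ (alternatingGroup.isConj_of ?_ ?_)
  · rintro rfl
    exact hq.one_lt.ne (orderOf_one.symm.trans hc)
  · exact (isCycle hc).isConj (isCycle hαc) ((card_support hc).trans (card_support hαc).symm)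
  · rwa [card_support hc]

end Perm

theorem PropertyRInfinity.of_alternatingGroup_quotients {G : Type*} [Group G] [Group.FG G]
    (h : ∀ n : ℕ, ∃ m > n, Odd m ∧ ∃ f : G →* alternatingGroup (Fin m), Function.Surjective f) :
    PropertyRInfinity G := by
  refine fun φ ↦ reidemeisterInfinite_of_forall_finiteIndex fun J _ ↦ ?_
  obtain ⟨m, hm, hodd, f, hf⟩ := h (J.normalCore.index + 5)
  have hm5 : 5 ≤ Fintype.card (Fin m) := by rw [Fintype.card_fin]; omega
  have := alternatingGroup.isSimpleGroup (by rwa [Nat.card_eq_fintype_card] : 5 ≤ Nat.card (Fin m))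
  have hindex : J.normalCore.index < Nat.card (alternatingGroup (Fin m)) :=
    lt_of_lt_of_le (by rw [Fintype.card_fin]; omega) (card_le_card_alternatingGroup (by omega))
  obtain ⟨g, hg, hV⟩ := exists_forall_mem_not_twistedConj
    (commutator_alternatingGroup_eq_top (by rwa [Nat.card_eq_fintype_card]))
    (exists_not_twistedConj_one_alternatingGroup (by rwa [Fintype.card_fin]) hm5) hf φ
    (map_eq_top_of_index_lt hf hindex)
  exact ⟨g, J.normalCore_le hg, hV⟩

theorem exists_closure_pair_eq_top_alternatingGroup {p : ℕ} (hp : p.Prime) (hp3 : 3 ≤ p) :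
    ∃ σ τ : alternatingGroup (Fin p), Subgroup.closure {σ, τ} = ⊤ := by
  obtain ⟨n, rfl⟩ : ∃ n, p = n + 3 := ⟨p - 3, by omega⟩
  have hσ : finRotate (n + 3) ∈ alternatingGroup (Fin (n + 3)) := by
    rw [mem_alternatingGroup, sign_finRotate]
    exact Even.neg_one_pow (hp.even_sub_one (by omega))
  have hτ : (Fin.cycleRange 2 : Perm (Fin (n + 3))).IsThreeCycle := Fin.isThreeCycle_cycleRange_two
  set σ : alternatingGroup (Fin (n + 3)) := ⟨_, hσ⟩
  set τ : alternatingGroup (Fin (n + 3)) := ⟨_, hτ.mem_alternatingGroup⟩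
  let H := (Subgroup.closure {σ, τ}).map (alternatingGroup _).subtype
  have mem_H {ρ} (hρ : ρ ∈ ({σ, τ} : Set _)) : (ρ : Perm (Fin (n + 3))) ∈ H :=
    Subgroup.mem_map_of_mem _ (Subgroup.subset_closure hρ)
  have : MulAction.IsPretransitive H (Fin (n + 3)) := by
    refine ⟨fun x y ↦ ?_⟩
    obtain ⟨i, hi⟩ := isCycle_finRotate.exists_zpow_eq (x := x) (y := y)
      (by simp) (by simp)
    exact ⟨⟨_, zpow_mem (mem_H (ρ := σ) (by simp)) i⟩, hi⟩
  have hle : alternatingGroup (Fin (n + 3)) ≤ H :=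
    alternatingGroup_le_of_isPreprimitive_of_isThreeCycle_mem (.of_prime_card (by simpa)) hτ
      (mem_H (ρ := τ) (by simp))
  refine ⟨σ, τ, eq_top_iff.mpr fun ρ _ ↦ ?_⟩
  obtain ⟨ρ', hρ', h⟩ := hle ρ.2
  exact Subtype.coe_injective h ▸ hρ'

end Alternating

theorem exists_surjective_freeGroup_bool_of_closure_pair {B : Type*} [Group B] {x y : B}
    (h : Subgroup.closure {x, y} = ⊤) : ∃ f : FreeGroup Bool →* B, Function.Surjective f := by
  refine ⟨FreeGroup.lift fun b ↦ cond b x y, ?_⟩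
  rw [← MonoidHom.range_eq_top, FreeGroup.range_lift_eq_closure, Bool.range_eq, Set.pair_comm]
  exact h

/-- A group is large, in the sense of Pride, if it has a finite-index subgroup which maps onto the
free group of rank two. -/
def IsLargeGroup (G : Type*) [Group G] : Prop :=
  ∃ N : Subgroup G, N.FiniteIndex ∧ ∃ θ : N →* FreeGroup Bool, Function.Surjective θ

theorem exists_characteristic_finiteIndex_le {G : Type*} [Group G] [Group.FG G] (N : Subgroup G)
    [N.FiniteIndex] : ∃ K ≤ N, K.Characteristic ∧ K.FiniteIndex := by
  let K : Subgroup G := ⨅ f : G →* Equiv.Perm (G ⧸ N), f.ker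
  refine ⟨K, fun g hg ↦ ?_, ?_, Subgroup.finiteIndex_iInf inferInstance⟩
  · have hg1 := Subgroup.mem_iInf.mp hg (MulAction.toPermHom G (G ⧸ N))
    rw [← Subgroup.normalCore_eq_ker] at hg1
    exact N.normalCore_le hg1
  · refine Subgroup.characteristic_iff_le_comap.mpr fun φ g hg ↦ ?_
    exact Subgroup.mem_iInf.mpr fun f ↦ Subgroup.mem_iInf.mp hg (f.comp φ.toMonoidHom)

theorem IsLargeGroup.of_surjective {G H : Type*} [Group G] [Group H] (hH : IsLargeGroup H)
    {f : G →* H} (hf : Function.Surjective f) : IsLargeGroup G := by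
  obtain ⟨N, _, θ, hθ⟩ := hH
  exact ⟨N.comap f, ⟨by rw [N.index_comap_of_surjective hf]; exact N.index_ne_zero_of_finite⟩,
    θ.comp (f.subgroupComap N), hθ.comp (f.subgroupComap_surjective_of_surjective N hf)⟩

theorem IsLargeGroup.propertyRInfinity {G : Type*} [Group G] [Group.FG G] (hG : IsLargeGroup G) :
    PropertyRInfinity G := by
  obtain ⟨N, _, θ, hθ⟩ := hG
  obtain ⟨K, hKN, _, _⟩ := exists_characteristic_finiteIndex_le N
  refine .of_characteristic K (.of_alternatingGroup_quotients fun n ↦ ?_)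
  obtain ⟨p, hp, hprime⟩ := Nat.exists_infinite_primes (n + (K.subgroupOf N).index + 5)
  obtain ⟨σ, τ, hστ⟩ := exists_closure_pair_eq_top_alternatingGroup hprime (by omega)
  obtain ⟨f, hf⟩ := exists_surjective_freeGroup_bool_of_closure_pair hστ
  have hp5 : 5 ≤ Nat.card (Fin p) := by rw [Nat.card_fin]; omega
  have := alternatingGroup.isSimpleGroup hp5
  have hindex : (K.subgroupOf N).index < Nat.card (alternatingGroup (Fin p)) :=
    lt_of_lt_of_le (by rw [Fintype.card_fin]; omega)
      (card_le_card_alternatingGroup (by rw [Fintype.card_fin]; omega))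
  refine ⟨p, by omega, hprime.odd_of_ne_two (by omega),
    (f.comp θ).comp (Subgroup.inclusion hKN), fun b ↦ ?_⟩
  obtain ⟨x, hxK, hxb⟩ : b ∈ (K.subgroupOf N).map (f.comp θ) := by
    rw [map_eq_top_of_index_lt (f := f.comp θ) (hf.comp hθ) hindex]
    trivial
  exact ⟨⟨x, hxK⟩, hxb⟩

theorem freeGroup_commute_of_subsingleton {α : Type*} [Subsingleton α] (x y : FreeGroup α) :
    Commute x y := by
  rcases isEmpty_or_nonempty α with _ | ⟨⟨a⟩⟩
  · exact Subsingleton.elim _ _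
  · have := uniqueOfSubsingleton a
    exact IsMulCommutative.is_comm.comm x y

/- By Nielsen–Schreier the range of `θ` is free; as it is not commutative, it has at least two
free generators. -/
theorem exists_surjective_freeGroup_bool_of_not_commute {G α : Type*} [Group G]
    (θ : G →* FreeGroup α) {x y : G} (hxy : ¬ Commute (θ x) (θ y)) :
    ∃ f : G →* FreeGroup Bool, Function.Surjective f := by
  let e := IsFreeGroup.toFreeGroup θ.range
  have : Nontrivial (IsFreeGroup.Generators θ.range) := by
    by_contra hsubsingleton
    rw [not_nontrivial_iff_subsingleton] at hsubsingleton
    have := (freeGroup_commute_of_subsingleton (e (θ.rangeRestrict x))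
      (e (θ.rangeRestrict y))).of_map e.injective
    exact hxy (this.map θ.range.subtype)
  obtain ⟨a, b, hab⟩ := exists_pair_ne (IsFreeGroup.Generators θ.range)
  classical
  have onto_bool : Function.Surjective fun x ↦ decide (x = a) := fun i ↦ by
    cases i
    exacts [⟨b, by simp [hab.symm]⟩, ⟨a, by simp⟩]
  exact ⟨((FreeGroup.map fun x ↦ decide (x = a)).comp e.toMonoidHom).comp θ.rangeRestrict,
    (FreeGroup.map_surjective onto_bool).comp (e.surjective.comp θ.rangeRestrict_surjective)⟩

/- Evaluation at `q` is a homomorphism on the base group of the wreath product. -/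
theorem IsLargeGroup.of_regularWreathProduct {G Q α : Type*} [Group G] [Group Q] [Finite Q]
    (Φ : G →* FreeGroup α ≀ᵣ Q) (q : Q) {x y : G} (hx : (Φ x).right = 1) (hy : (Φ y).right = 1)
    (hxy : ¬ Commute ((Φ x).left q) ((Φ y).left q)) : IsLargeGroup G := by
  let N := (RegularWreathProduct.rightHom.comp Φ).ker
  have right_eq_one (n : N) : (Φ n).right = 1 := n.2
  let θ : N →* FreeGroup α :=
    { toFun n := (Φ n).left q
      map_one' := by simp
      map_mul' m n := by simp [right_eq_one] }
  exact ⟨N, inferInstance, exists_surjective_freeGroup_bool_of_not_commute θ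
    (x := ⟨x, hx⟩) (y := ⟨y, hy⟩) hxy⟩

theorem freeGroup_not_commute_of_false_of_true :
    ¬ Commute (FreeGroup.of false) (FreeGroup.of true) := by
  unfold Commute SemiconjBy; decide

/- Let `inr q` act by translation and `inl p` by translation conjugated by a function `f` supported
on `{1} × Q`; the commutator of `inr q` and `inl p` then takes the value `f (1, q⁻¹) * (f 1)⁻¹`
at `1`. -/
theorem IsLargeGroup.coprod {P Q : Type*} [Group P] [Group Q] [Finite P] [Finite Q] {p : P}
    (hp : p ≠ 1) {q₁ q₂ : Q} (hq₁ : q₁ ≠ 1) (hq₂ : q₂ ≠ 1) (hq : q₁ ≠ q₂) :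
    IsLargeGroup (Monoid.Coprod P Q) := by
  classical
  let f (x : P × Q) : FreeGroup Bool :=
    if x = (1, q₁⁻¹) then .of false else if x = (1, q₂⁻¹) then .of true else 1
  let translation : P × Q →* FreeGroup Bool ≀ᵣ (P × Q) := RegularWreathProduct.inl
  let Φ : Monoid.Coprod P Q →* FreeGroup Bool ≀ᵣ (P × Q) := Monoid.Coprod.lift
    ((MulAut.conj ⟨f, 1⟩).toMonoidHom.comp (translation.comp (MonoidHom.inl P Q)))
    (translation.comp (MonoidHom.inr P Q))
  let comm (q : Q) : Monoid.Coprod P Q := .inr q * .inl p * .inr q⁻¹ * .inl p⁻¹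
  have right_comm (q : Q) : (Φ (comm q)).right = 1 := by simp [Φ, comm, translation]
  have left_comm (q : Q) : (Φ (comm q)).left 1 = f (1, q⁻¹) := by
    simp [Φ, comm, translation, f, hp, hq₁, hq₂, Prod.ext_iff]
  refine .of_regularWreathProduct Φ 1 (right_comm q₁) (right_comm q₂) ?_
  simpa [left_comm, f, hq.symm] using freeGroup_not_commute_of_false_of_true

/-- The alternating product `a * b * a * ⋯` with `m` factors. -/
def altProd {G : Type*} [Group G] (a b : G) : ℕ → G
  | 0 => 1
  | m + 1 => a * altProd b a m

section altProd

variable {G : Type*} [Group G]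

theorem altProd_two_mul (a b : G) (k : ℕ) : altProd a b (2 * k) = (a * b) ^ k := by
  induction k with
  | zero => simp [altProd]
  | succ k ih => rw [mul_add_one, altProd, altProd, ih, pow_succ', mul_assoc]

theorem altProd_two_mul_add_one (a b : G) (k : ℕ) :
    altProd a b (2 * k + 1) = (a * b) ^ k * a := by
  induction k with
  | zero => simp [altProd]
  | succ k ih => rw [mul_add_one, add_right_comm, altProd, altProd, ih, pow_succ']; group

theorem altWord_succ {S : Type*} (s t : S) (m : ℕ) :
    altWord s t (m + 1) = FreeGroup.of s * altWord t s m := by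
  have ite_succ (k : ℕ) : (if (k + 1) % 2 = 0 then FreeGroup.of s else FreeGroup.of t) =
      if k % 2 = 0 then FreeGroup.of t else FreeGroup.of s := by
    split_ifs <;> first | rfl | omega
  simp [altWord, List.range_succ_eq_map, Function.comp_def, ite_succ]

theorem lift_altWord {S : Type*} (τ : S → G) (s t : S) (m : ℕ) :
    FreeGroup.lift τ (altWord s t m) = altProd (τ s) (τ t) m := by
  induction m generalizing s t with
  | zero => simp [altWord, altProd]
  | succ m ih => rw [altWord_succ, map_mul, FreeGroup.lift_apply_of, ih, altProd]

end altProd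

theorem exists_artinGroup_hom {S G : Type*} [Group G] {M : S → S → ℕ} (τ : S → G)
    (hτ : ∀ s t, s ≠ t → 2 ≤ M s t → altProd (τ s) (τ t) (M s t) = altProd (τ t) (τ s) (M s t)) :
    ∃ Φ : ArtinGroup M →* G, ∀ s, Φ (artinGen M s) = τ s := by
  have rels_trivial : ∀ r ∈ artinRels M, FreeGroup.lift τ r = 1 := by
    rintro _ ⟨s, t, hst, hm, rfl⟩
    rw [map_mul, map_inv, lift_altWord, lift_altWord, hτ s t hst hm, mul_inv_cancel]
  exact ⟨PresentedGroup.toGroup rels_trivial, fun s ↦ PresentedGroup.toGroup.of rels_trivial⟩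

instance artinGroup_fg {S : Type*} [Finite S] (M : S → S → ℕ) : Group.FG (ArtinGroup M) :=
  Group.fg_iff.mpr ⟨_, PresentedGroup.closure_range_of _, Set.finite_range _⟩

theorem exists_surjective_artinGroup_of_closure_pair {S G : Type*} [Group G] {M : S → S → ℕ}
    (hM : ∀ s t, M s t = M t s) {s t : S} (hst : s ≠ t) (hS : ∀ u, u = s ∨ u = t) {x y : G}
    (hxy : altProd x y (M s t) = altProd y x (M s t)) (hgen : Subgroup.closure {x, y} = ⊤) :
    ∃ Φ : ArtinGroup M →* G, Function.Surjective Φ := by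
  classical
  obtain ⟨Φ, hΦ⟩ : ∃ Φ : ArtinGroup M →* G, ∀ u, Φ (artinGen M u) = if u = s then x else y := by
    refine exists_artinGroup_hom _ fun u v huv _ ↦ ?_
    rcases hS u with rfl | rfl <;> rcases hS v with rfl | rfl
    · exact absurd rfl huv
    · simpa [huv.symm] using hxy
    · simpa [huv, hM] using hxy.symm
    · exact absurd rfl huv
  refine ⟨Φ, Φ.range_eq_top.mp (top_le_iff.mp (hgen ▸ (Subgroup.closure_le _).mpr ?_))⟩
  rintro z (rfl | rfl)
  exacts [⟨artinGen M s, by simp [hΦ]⟩, ⟨artinGen M t, by simp [hΦ, hst.symm]⟩]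

theorem coprod_subgroup_eq_top_of_mem {P Q : Type*} [Group P] [Group Q] {p : P} {q : Q}
    (hp : ∀ x, x ∈ Subgroup.zpowers p) (hq : ∀ x, x ∈ Subgroup.zpowers q)
    {H : Subgroup (Monoid.Coprod P Q)} (hpH : .inl p ∈ H) (hqH : .inr q ∈ H) : H = ⊤ := by
  rw [eq_top_iff, ← Monoid.Coprod.range_inl_sup_range_inr, sup_le_iff]
  constructor
  · rintro _ ⟨x, rfl⟩
    obtain ⟨i, rfl⟩ := hp x
    simpa using zpow_mem hpH i
  · rintro _ ⟨x, rfl⟩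
    obtain ⟨i, rfl⟩ := hq x
    simpa using zpow_mem hqH i

theorem altProd_two_mul_comm {G : Type*} [Group G] {p : G} (q : G) {k : ℕ} (hp : p ^ k = 1) :
    altProd q (q⁻¹ * p) (2 * k) = altProd (q⁻¹ * p) q (2 * k) := by
  have hconj : (q⁻¹ * p * q) ^ k = 1 := by simpa [hp] using conj_pow (i := k) (a := q⁻¹) (b := p)
  rw [altProd_two_mul, altProd_two_mul, mul_inv_cancel_left, hp, hconj]

theorem altProd_two_mul_add_one_comm {G : Type*} [Group G] {p q : G} {k : ℕ} (hp : p ^ 2 = 1)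
    (hq : q ^ (2 * k + 1) = 1) :
    altProd ((q ^ k)⁻¹ * p) (p⁻¹ * q ^ (k + 1)) (2 * k + 1) =
      altProd (p⁻¹ * q ^ (k + 1)) ((q ^ k)⁻¹ * p) (2 * k + 1) := by
  have hxy : (q ^ k)⁻¹ * p * (p⁻¹ * q ^ (k + 1)) = q := by group
  have hyx : p⁻¹ * q ^ (k + 1) * ((q ^ k)⁻¹ * p) = p⁻¹ * q * p := by group
  have hconj : (p⁻¹ * q * p) ^ k = p⁻¹ * q ^ k * p := by
    simpa using conj_pow (i := k) (a := p⁻¹) (b := q)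
  rw [altProd_two_mul_add_one, altProd_two_mul_add_one, hxy, hyx, hconj]
  calc
    q ^ k * ((q ^ k)⁻¹ * p) = p := mul_inv_cancel_left _ _
    _ = p⁻¹ := eq_inv_of_mul_eq_one_left (by rw [← pow_two, hp])
    _ = p⁻¹ * q ^ (2 * k + 1) := by rw [hq, mul_one]
    _ = p⁻¹ * q ^ k * p * (p⁻¹ * q ^ (k + 1)) := by group

theorem isLargeGroup_coprod_zmod {m n : ℕ} (hm : 2 ≤ m) (hn : 3 ≤ n) :
    IsLargeGroup (Monoid.Coprod (Multiplicative (ZMod m)) (Multiplicative (ZMod n))) := by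
  have : NeZero m := ⟨by omega⟩
  have : NeZero n := ⟨by omega⟩
  have : Fact (1 < m) := ⟨hm⟩
  have : Fact (2 < n) := ⟨hn⟩
  have : Fact (1 < n) := ⟨by omega⟩
  exact .coprod (p := .ofAdd 1) (q₁ := .ofAdd 1) (q₂ := .ofAdd (-1)) (by simp) (by simp) (by simp)
    fun h ↦ ZMod.neg_one_ne_one (Multiplicative.ofAdd.injective h).symm

theorem mem_zpowers_ofAdd_one {n : ℕ} (x : Multiplicative (ZMod n)) :
    x ∈ Subgroup.zpowers (Multiplicative.ofAdd (1 : ZMod n)) := by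
  obtain ⟨i, hi⟩ := ZMod.intCast_surjective x.toAdd
  exact Subgroup.mem_zpowers_iff.mpr ⟨i, by rw [← ofAdd_zsmul, zsmul_one, hi, ofAdd_toAdd]⟩

theorem ofAdd_one_pow_eq_one {n k : ℕ} (hnk : n ∣ k) :
    Multiplicative.ofAdd (1 : ZMod n) ^ k = 1 := by
  rw [← ofAdd_nsmul, nsmul_one, (ZMod.natCast_eq_zero_iff k n).mpr hnk, ofAdd_zero]

section Dihedral

variable {S : Type*} {M : S → S → ℕ} (hM : ∀ s t, M s t = M t s) {s t : S} (hst : s ≠ t)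
  (hS : ∀ u, u = s ∨ u = t) {k : ℕ}

include hM hst hS

theorem exists_surjective_artinGroup_coprod_of_even (hk : M s t = 2 * k) {m : ℕ} (hmk : m ∣ k)
    (n : ℕ) : ∃ Φ : ArtinGroup M →* Monoid.Coprod (Multiplicative (ZMod m))
      (Multiplicative (ZMod n)), Function.Surjective Φ := by
  let p : Monoid.Coprod (Multiplicative (ZMod m)) (Multiplicative (ZMod n)) := .inl (.ofAdd 1)
  let q : Monoid.Coprod (Multiplicative (ZMod m)) (Multiplicative (ZMod n)) := .inr (.ofAdd 1)
  have hp : p ^ k = 1 := by rw [← map_pow, ofAdd_one_pow_eq_one hmk, map_one]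
  have hq_mem : q ∈ Subgroup.closure {q, q⁻¹ * p} := Subgroup.subset_closure (by simp)
  have hp_mem : p ∈ Subgroup.closure {q, q⁻¹ * p} := by
    simpa using mul_mem hq_mem (Subgroup.subset_closure (by simp : q⁻¹ * p ∈ _))
  exact exists_surjective_artinGroup_of_closure_pair hM hst hS (hk ▸ altProd_two_mul_comm q hp)
    (coprod_subgroup_eq_top_of_mem mem_zpowers_ofAdd_one mem_zpowers_ofAdd_one hp_mem hq_mem)

theorem exists_surjective_artinGroup_coprod_of_odd (hk : M s t = 2 * k + 1) :
    ∃ Φ : ArtinGroup M →* Monoid.Coprod (Multiplicative (ZMod 2))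
      (Multiplicative (ZMod (2 * k + 1))), Function.Surjective Φ := by
  let p : Monoid.Coprod (Multiplicative (ZMod 2)) (Multiplicative (ZMod (2 * k + 1))) :=
    .inl (.ofAdd 1)
  let q : Monoid.Coprod (Multiplicative (ZMod 2)) (Multiplicative (ZMod (2 * k + 1))) :=
    .inr (.ofAdd 1)
  have hp : p ^ 2 = 1 := by rw [← map_pow, ofAdd_one_pow_eq_one dvd_rfl, map_one]
  have hq : q ^ (2 * k + 1) = 1 := by rw [← map_pow, ofAdd_one_pow_eq_one dvd_rfl, map_one]
  let x := (q ^ k)⁻¹ * p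
  let y := p⁻¹ * q ^ (k + 1)
  have hx_mem : x ∈ Subgroup.closure {x, y} := Subgroup.subset_closure (by simp)
  have hq_mem : q ∈ Subgroup.closure {x, y} := by
    have hxy : x * y = q := by simp only [x, y]; group
    exact hxy ▸ mul_mem hx_mem (Subgroup.subset_closure (by simp))
  have hp_mem : p ∈ Subgroup.closure {x, y} := by
    simpa [x] using mul_mem (pow_mem hq_mem k) hx_mem
  exact exists_surjective_artinGroup_of_closure_pair hM hst hS
    (by rw [hk]; exact altProd_two_mul_add_one_comm hp hq)
    (coprod_subgroup_eq_top_of_mem mem_zpowers_ofAdd_one mem_zpowers_ofAdd_one hp_mem hq_mem)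

theorem isLargeGroup_artinGroup_of_pair (hlarge : M s t = 0 ∨ 3 ≤ M s t) :
    IsLargeGroup (ArtinGroup M) := by
  obtain ⟨k, hk | hk⟩ := Nat.even_or_odd' (M s t)
  -- The label `∞` is the case `k = 0`, where `Nat.minFac 0 = 2`.
  · obtain ⟨Φ, hΦ⟩ :=
      exists_surjective_artinGroup_coprod_of_even hM hst hS hk (Nat.minFac_dvd k) 3
    exact (isLargeGroup_coprod_zmod (Nat.minFac_prime (by omega)).two_le le_rfl).of_surjective hΦ
  · obtain ⟨Φ, hΦ⟩ := exists_surjective_artinGroup_coprod_of_odd hM hst hS hk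
    exact (isLargeGroup_coprod_zmod le_rfl (by omega)).of_surjective hΦ

end Dihedral

section Involutions

variable {Q : Type*} [Group Q] {a b : Q}

theorem altProd_mul_inv_altProd (ha : a * a = 1) (hb : b * b = 1) (m : ℕ) :
    altProd a b m * (altProd b a m)⁻¹ = (a * b) ^ m := by
  induction m generalizing a b with
  | zero => simp [altProd]
  | succ m ih =>
    calc
      a * altProd b a m * (b * altProd a b m)⁻¹
          = a * (altProd b a m * (altProd a b m)⁻¹) * b⁻¹ := by group
      _ = (a * b) ^ (m + 1) := by
        rw [ih hb ha, ← mul_pow_mul, inv_eq_of_mul_eq_one_left hb, mul_assoc, pow_succ]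

theorem pow_mul_mul_pow_mul (ha : a * a = 1) (hb : b * b = 1) (i j : ℕ) :
    (a * b) ^ i * a * ((a * b) ^ j * a) = (a * b) ^ (i - j : ℤ) := by
  have hba : b * a = (a * b)⁻¹ := by
    rw [mul_inv_rev, inv_eq_of_mul_eq_one_left ha, inv_eq_of_mul_eq_one_left hb]
  calc
    (a * b) ^ i * a * ((a * b) ^ j * a) = (a * b) ^ i * (a * a) * (b * a) ^ j := by
      nth_rw 2 [mul_pow_mul]; simp only [mul_assoc]
    _ = (a * b) ^ (i - j : ℤ) := by
      rw [ha, mul_one, hba, inv_pow, zpow_sub, zpow_natCast, zpow_natCast]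

theorem pow_mul_mul_pow_mul_pow_eq_one (ha : a * a = 1) (hb : b * b = 1) {m : ℕ}
    (hab : (a * b) ^ m = 1) (i j : ℕ) : ((a * b) ^ i * a * ((a * b) ^ j * a)) ^ m = 1 := by
  rw [pow_mul_mul_pow_mul ha hb, ← zpow_natCast, zpow_comm, zpow_natCast, hab, one_zpow]

theorem pow_mul_eq_pow_sub_mul (ha : a * a = 1) (hb : b * b = 1) {m : ℕ} (hab : (a * b) ^ m = 1)
    {j : ℕ} (hj : j < m) : (b * a) ^ j * b = (a * b) ^ (m - 1 - j) * a := by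
  have hba : b * a = (a * b)⁻¹ := by
    rw [mul_inv_rev, inv_eq_of_mul_eq_one_left ha, inv_eq_of_mul_eq_one_left hb]
  have hpow : (a * b) ^ (m - 1 - j) * (a * b) * (a * b) ^ j = 1 := by
    rw [← pow_succ, ← pow_add, show m - 1 - j + 1 + j = m by omega, hab]
  calc
    (b * a) ^ j * b = ((a * b) ^ j)⁻¹ * b⁻¹ := by
      rw [hba, inv_pow, inv_eq_of_mul_eq_one_left hb]
    _ = (a * b) ^ (m - 1 - j) * a := by
      rw [← mul_inv_rev]
      exact inv_eq_of_mul_eq_one_left (by rw [← hpow]; group)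

variable {Γ : Type*} [Group Γ]

/-- The element of the wreath product which lies over `a` and whose value at `x` is the value of
`β` at `x⁻¹ * a * x`. -/
def conjWreath (β : Q → Γ) (a : Q) : Γ ≀ᵣ Q := ⟨fun x ↦ β (MulAut.conj x⁻¹ a), a⟩

theorem altProd_conjWreath_right (β : Q → Γ) (m : ℕ) :
    (altProd (conjWreath β a) (conjWreath β b) m).right = altProd a b m := by
  induction m generalizing a b with
  | zero => rfl
  | succ m ih => rw [altProd, RegularWreathProduct.mul_right, ih]; rfl

theorem altProd_conjWreath_left (β : Q → Γ) (ha : a * a = 1) (hb : b * b = 1) (m : ℕ) (x : Q) :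
    (altProd (conjWreath β a) (conjWreath β b) m).left x =
      ((List.range m).map fun j ↦ β (MulAut.conj x⁻¹ ((a * b) ^ j * a))).prod := by
  induction m generalizing a b x with
  | zero => rfl
  | succ m ih =>
    have hconj (j : ℕ) : MulAut.conj a ((b * a) ^ j * b) = (a * b) ^ (j + 1) * a := by
      rw [MulAut.conj_apply, inv_eq_of_mul_eq_one_left ha, ← mul_assoc, ← mul_pow_mul, pow_succ,
        mul_assoc _ a b]
    have left_succ : (altProd (conjWreath β a) (conjWreath β b) (m + 1)).left x =
        β (MulAut.conj x⁻¹ a) * (altProd (conjWreath β b) (conjWreath β a) m).left (a⁻¹ * x) := rfl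
    rw [left_succ, ih hb ha, List.range_succ_eq_map, List.map_cons, List.prod_cons, List.map_map]
    simp only [mul_inv_rev, inv_inv, map_mul MulAut.conj, MulAut.mul_apply, hconj, pow_zero,
      one_mul, Function.comp_def, Nat.succ_eq_add_one]

/- The values of the two alternating products at `x` are products of the same elements in opposite
orders. -/
theorem altProd_conjWreath_comm {β : Q → Γ} (ha : a * a = 1) (hb : b * b = 1) {m : ℕ}
    (hab : (a * b) ^ m = 1) (hβ : ∀ y z, (y * z) ^ m = 1 → Commute (β y) (β z)) :
    altProd (conjWreath β a) (conjWreath β b) m = altProd (conjWreath β b) (conjWreath β a) m := by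
  ext x
  · let f (j : ℕ) : Γ := β (MulAut.conj x⁻¹ ((a * b) ^ j * a))
    have commute_f (i j : ℕ) : Commute (f i) (f j) := by
      refine hβ _ _ ?_
      rw [← map_mul, ← map_pow, pow_mul_mul_pow_mul_pow_eq_one ha hb hab, map_one]
    have reversed : ((List.range m).map fun j ↦ β (MulAut.conj x⁻¹ ((b * a) ^ j * b))) =
        (List.range m).reverse.map f := by
      rw [List.range_eq_range', List.reverse_range', List.map_map, ← List.range_eq_range']
      refine List.map_congr_left fun j hj ↦ ?_
      rw [pow_mul_eq_pow_sub_mul ha hb hab (List.mem_range.mp hj), Function.comp_apply, zero_add]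
    rw [altProd_conjWreath_left β ha hb, altProd_conjWreath_left β hb ha, reversed]
    exact ((List.reverse_perm _).symm.map f).prod_eq'
      (List.pairwise_map.mpr (List.pairwise_of_forall commute_f))
  · rw [altProd_conjWreath_right, altProd_conjWreath_right]
    exact mul_inv_eq_one.mp ((altProd_mul_inv_altProd ha hb m).trans hab)

theorem conjWreath_sq (β : Q → Γ) (ha : a * a = 1) :
    conjWreath β a ^ 2 = ⟨fun x ↦ β (MulAut.conj x⁻¹ a) ^ 2, 1⟩ := by
  ext <;> simp [conjWreath, pow_two, ha]

theorem conjWreath_mul_sq_mul_inv_left_one (β : Q → Γ) (a : Q) (hb : b * b = 1) :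
    (conjWreath β a * conjWreath β b ^ 2 * (conjWreath β a)⁻¹).left 1 =
      β a * β (a * b * a⁻¹) ^ 2 * (β a)⁻¹ := by
  rw [conjWreath_sq β hb]
  simp [conjWreath]

end Involutions

section Artin

variable {S Q : Type*} [Group Q] [Finite Q] {M : S → S → ℕ} {π : S → Q}
  (hsq : ∀ s, π s * π s = 1) (hrel : ∀ s t, s ≠ t → (π s * π t) ^ M s t = 1)

include hsq hrel

theorem isLargeGroup_artinGroup_of_conjWreath {α : Type*} {β : Q → FreeGroup α}
    (hβ : ∀ s t, s ≠ t → M s t ≠ 0 → ∀ y z, (y * z) ^ M s t = 1 → Commute (β y) (β z)) {s t u : S}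
    (hne : ¬ Commute (β (π s) ^ 2) (β (π t) * β (π t * π u * (π t)⁻¹) ^ 2 * (β (π t))⁻¹)) :
    IsLargeGroup (ArtinGroup M) := by
  obtain ⟨Φ, hΦ⟩ : ∃ Φ : ArtinGroup M →* FreeGroup α ≀ᵣ Q,
      ∀ s, Φ (artinGen M s) = conjWreath β (π s) :=
    exists_artinGroup_hom _ fun a b hab hm ↦
      altProd_conjWreath_comm (hsq a) (hsq b) (hrel a b hab) (hβ a b hab (by omega))
  have hx : Φ (artinGen M s ^ 2) = conjWreath β (π s) ^ 2 := by rw [map_pow, hΦ]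
  have hy : Φ (artinGen M t * artinGen M u ^ 2 * (artinGen M t)⁻¹) =
      conjWreath β (π t) * conjWreath β (π u) ^ 2 * (conjWreath β (π t))⁻¹ := by
    simp only [map_mul, map_pow, map_inv, hΦ]
  refine .of_regularWreathProduct Φ 1 (x := artinGen M s ^ 2)
    (y := artinGen M t * artinGen M u ^ 2 * (artinGen M t)⁻¹) ?_ ?_ ?_
  · rw [hx, conjWreath_sq β (hsq s)]
  · simp [hy, conjWreath_sq β (hsq u)]
  · rw [hx, hy, conjWreath_mul_sq_mul_inv_left_one β (π t) (hsq u), conjWreath_sq β (hsq s)]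
    simpa using hne

/- Take `β` supported on the two factors in `hne`: the order of their product divides no finite
label, so that their values under `β` never have to commute. -/
theorem isLargeGroup_artinGroup_of_involutions {D : ℕ}
    (hD : ∀ s t, s ≠ t → M s t ≠ 0 → M s t ∣ D) {s t u : S}
    (hne : (π s * (π t * π u * (π t)⁻¹)) ^ D ≠ 1) : IsLargeGroup (ArtinGroup M) := by
  classical
  set c₁ := π s with hc₁
  set c₂ := π t * π u * (π t)⁻¹ with hc₂
  have hne_swap : (c₂ * c₁) ^ D ≠ 1 := fun h ↦ hne <| by
    rw [← mul_eq_right (b := c₁), mul_pow_mul, h, mul_one]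
  have hc : c₂ ≠ c₁ := fun h ↦ hne (by rw [h, hsq, one_pow])
  let β (y : Q) : FreeGroup Bool := if y = c₁ then .of false else if y = c₂ then .of true else 1
  have hβ₁ : β c₁ = .of false := if_pos rfl
  have hβ₂ : β c₂ = .of true := (if_neg hc).trans (if_pos rfl)
  refine isLargeGroup_artinGroup_of_conjWreath hsq hrel (β := β) (s := s) (t := t) (u := u) ?_ ?_
  · intro a b hab hm y z hyz
    have hyzD : (y * z) ^ D = 1 := by
      obtain ⟨k, rfl⟩ := hD a b hab hm
      rw [pow_mul, hyz, one_pow]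
    have hyz₁ : ¬ (y = c₁ ∧ z = c₂) := fun h ↦ hne (h.1 ▸ h.2 ▸ hyzD)
    have hyz₂ : ¬ (y = c₂ ∧ z = c₁) := fun h ↦ hne_swap (h.1 ▸ h.2 ▸ hyzD)
    unfold β
    split_ifs <;> first | exact .refl _ | exact .one_left _ | exact .one_right _ | tauto
  · rw [← hc₁, ← hc₂, hβ₁, hβ₂]
    unfold β
    split_ifs <;> unfold Commute SemiconjBy <;> decide

end Artin

section Reflections

open Polynomial Polynomial.Chebyshev

/-- For `3 ≤ m`, an integral polynomial which vanishes at `2 * cos (2 * π / m)`; for `m = 0`, which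
encodes the label `∞`, the polynomial `0`. The `m`-th power of a product of two reflections is
trivial when the trace of the product on the plane which it moves is a root. -/
noncomputable def dihedralPoly (m : ℕ) : ℤ[X] :=
  if Even m then S ℤ (m / 2 - 1) else S ℤ (m / 2) + S ℤ (m / 2 - 1)

section CommRing

variable {A : Type*} [CommRing A]

theorem aeval_dihedralPoly_two_mul (k : ℕ) (t : A) :
    aeval t (dihedralPoly (2 * k)) = (S A (k - 1)).eval t := by
  rw [dihedralPoly, if_pos (even_two_mul k), aeval_S]
  congr 2
  omega

theorem aeval_dihedralPoly_two_mul_add_one (k : ℕ) (t : A) :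
    aeval t (dihedralPoly (2 * k + 1)) = (S A k).eval t + (S A (k - 1)).eval t := by
  rw [dihedralPoly, if_neg (Nat.not_even_two_mul_add_one k), map_add, aeval_S, aeval_S]
  congr 3 <;> omega

variable {V : Type*} [AddCommGroup V] [Module A V] {x y : V} {f g : Module.Dual A V}

theorem reflection_mul_reflection_pow_eq_one (hf : f x = 2) (hg : g y = 2) {m : ℕ}
    (h : aeval (f y * g x - 2) (dihedralPoly m) = 0) :
    (Module.reflection hf * Module.reflection hg) ^ m = 1 := by
  ext z
  rw [Module.reflection_mul_reflection_pow_apply hf hg m z]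
  obtain ⟨k, rfl | rfl⟩ := Nat.even_or_odd' m
  · rw [aeval_dihedralPoly_two_mul] at h
    rw [show ((2 * k : ℕ) - 2 : ℤ) / 2 = k - 1 by omega,
      show ((2 * k : ℕ) - 1 : ℤ) / 2 = k - 1 by omega, h]
    simp
  · rw [aeval_dihedralPoly_two_mul_add_one] at h
    rw [show ((2 * k + 1 : ℕ) - 1 : ℤ) / 2 = k by omega,
      show ((2 * k + 1 : ℕ) - 3 : ℤ) / 2 = k - 1 by omega,
      show ((2 * k + 1 : ℕ) : ℤ) / 2 = k by omega,
      show ((2 * k + 1 : ℕ) - 2 : ℤ) / 2 = k - 1 by omega, h]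
    simp

theorem reflection_mul_reflection_pow_ne_one (hf : f x = 2) (hg : g y = 2) {n : ℕ}
    (h : aeval (f y * g x - 2) (S ℤ (n - 1)) * g x ≠ 0) {e : Module.Dual A V} (hx : e x = 0)
    (hy : e y = 1) : (Module.reflection hf * Module.reflection hg) ^ n ≠ 1 := by
  intro hpow
  have e_apply := congrArg e (Module.reflection_mul_reflection_pow_apply_self hf hg n)
  rw [hpow, LinearEquiv.coe_one, id_eq, map_add, map_smul, map_smul, hx, hy, smul_zero, zero_add,
    smul_eq_mul, mul_one, mul_neg, zero_eq_neg] at e_apply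
  exact h (by rw [aeval_S, e_apply])

theorem mul_reflection_mul_inv (e : V ≃ₗ[A] V) (hf : f x = 2) :
    e * Module.reflection hf * e⁻¹ =
      Module.reflection (x := e x) (f := f ∘ₗ (e⁻¹ : V ≃ₗ[A] V)) (by simpa using hf) := by
  ext z
  simp [Module.reflection_apply]

end CommRing

/-- A generalised Cartan matrix for the Coxeter matrix `M`: the product of the reflections of two
distinct coordinates `s` and `t` has order dividing `M s t`. -/
structure IsCartanMatrix {S A : Type*} [CommRing A] (M : S → S → ℕ) (κ : Matrix S S A) :
    Prop where
  diag (s : S) : κ s s = 2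
  aeval_dihedralPoly {s t : S} (hst : s ≠ t) :
    aeval (κ s t * κ t s - 2) (dihedralPoly (M s t)) = 0

/-- For a generalised Cartan matrix `κ`, the entry at `(u, s)` of `1 - (r * r') ^ n`, where `r` is
the reflection of the coordinate `s` and `r'` is the reflection of the coordinate `u` conjugated by
that of the coordinate `t`. -/
noncomputable def conjPowEntry {S A : Type*} [CommRing A] (κ : Matrix S S A) (s t u : S) (n : ℕ) :
    A :=
  aeval ((κ s u - κ s t * κ t u) * (κ u s - κ u t * κ t s) - 2) (Chebyshev.S ℤ (n - 1)) *
    (κ u s - κ u t * κ t s)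

section CartanMatrix

variable {S A B : Type*} [CommRing A] [CommRing B] {M : S → S → ℕ} {κ : Matrix S S A}

theorem map_conjPowEntry (φ : A →+* B) (κ : Matrix S S A) (s t u : S) (n : ℕ) :
    conjPowEntry (κ.map φ) s t u n = φ (conjPowEntry κ s t u n) := by
  rw [conjPowEntry, conjPowEntry, map_mul, ← φ.toIntAlgHom_apply (aeval _ _), ← aeval_algHom_apply]
  simp [map_ofNat]

namespace IsCartanMatrix

theorem map (hκ : IsCartanMatrix M κ) (φ : A →+* B) : IsCartanMatrix M (κ.map φ) where
  diag s := by simp [hκ.diag, map_ofNat]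
  aeval_dihedralPoly {s t} hst := by
    simpa [hκ.aeval_dihedralPoly hst, map_ofNat] using
      aeval_algHom_apply φ.toIntAlgHom (κ s t * κ t s - 2) (dihedralPoly (M s t))

theorem of_map {φ : A →+* B} (hφ : Function.Injective φ) (hκ : IsCartanMatrix M (κ.map φ)) :
    IsCartanMatrix M κ where
  diag s := hφ (by simpa [map_ofNat] using hκ.diag s)
  aeval_dihedralPoly {s t} hst := hφ <| by
    have h := aeval_algHom_apply φ.toIntAlgHom (κ s t * κ t s - 2) (dihedralPoly (M s t))
    simpa [map_ofNat] using h.symm.trans (by simpa [map_ofNat] using hκ.aeval_dihedralPoly hst)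

variable [Finite S] {s t u : S} {D : ℕ}

theorem isLargeGroup_artinGroup_of_finite [Finite A] (hκ : IsCartanMatrix M κ)
    (hsu : s ≠ u) (htu : t ≠ u) (hD : ∀ s t, s ≠ t → M s t ≠ 0 → M s t ∣ D)
    (hne : conjPowEntry κ s t u D ≠ 0) : IsLargeGroup (ArtinGroup M) := by
  classical
  have := Fintype.ofFinite S
  let v (s : S) : S → A := Pi.single s 1
  let f (s : S) : Module.Dual A (S → A) := LinearMap.proj s ∘ₗ Matrix.toLin' κ
  have hfv (s t : S) : f s (v t) = κ s t := by simp [f, v]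
  have hf (s : S) : f s (v s) = 2 := (hfv s s).trans (hκ.diag s)
  let r (s : S) : (S → A) ≃ₗ[A] (S → A) := Module.reflection (hf s)
  have hrv (s t : S) : r s (v t) = v t - κ s t • v s := by
    rw [Module.reflection_apply, hfv]
  have : Finite ((S → A) ≃ₗ[A] (S → A)) := DFunLike.finite _
  refine isLargeGroup_artinGroup_of_involutions (π := r) (s := s) (t := t) (u := u)
    (fun s ↦ inv_mul_cancel (r s)) (fun s t hst ↦ ?_) hD ?_
  · refine reflection_mul_reflection_pow_eq_one (hf s) (hf t) ?_
    rw [hfv, hfv, hκ.aeval_dihedralPoly hst]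
  · rw [mul_reflection_mul_inv]
    refine reflection_mul_reflection_pow_ne_one (hf s) _ (e := LinearMap.proj u) ?_ ?_ ?_
    · have hleft : f s (r t (v u)) = κ s u - κ s t * κ t u := by
        rw [hrv, map_sub, map_smul, hfv, hfv, smul_eq_mul, mul_comm]
      have hright : f u (r t (v s)) = κ u s - κ u t * κ t s := by
        rw [hrv, map_sub, map_smul, hfv, hfv, smul_eq_mul, mul_comm]
      change aeval (f s (r t (v u)) * f u (r t (v s)) - 2) _ * f u (r t (v s)) ≠ 0
      rwa [hleft, hright]
    · simp [v, hsu]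
    · simp [hrv, v, htu]

end IsCartanMatrix

theorem exists_ideal_finite_quotient_notMem {R : Type*} [CommRing R] [IsDomain R]
    [Ring.HasFiniteQuotients R] (hR : ¬ IsField R) {a : R} (ha : a ≠ 0) :
    ∃ I : Ideal R, Finite (R ⧸ I) ∧ a ∉ I := by
  obtain ⟨b, hb, hb_unit⟩ := Ring.exists_not_isUnit_of_not_isField hR
  refine ⟨Ideal.span {b * a}, Ring.HasFiniteQuotients.finiteQuotient ?_, fun h ↦ hb_unit ?_⟩
  · simp [hb, ha]
  · obtain ⟨c, hc⟩ := Ideal.mem_span_singleton'.mp h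
    exact .of_mul_eq_one c (mul_right_cancel₀ ha (by linear_combination hc))

theorem IsCartanMatrix.isLargeGroup_artinGroup_of_isIntegral [Finite S] {K : Type*} [Field K]
    [CharZero K] {κ : Matrix S S K} (hκ : IsCartanMatrix M κ) (hint : ∀ s t, IsIntegral ℤ (κ s t))
    {s t u : S} {D : ℕ} (hsu : s ≠ u) (htu : t ≠ u)
    (hD : ∀ s t, s ≠ t → M s t ≠ 0 → M s t ∣ D) (hne : conjPowEntry κ s t u D ≠ 0) :
    IsLargeGroup (ArtinGroup M) := by
  let R := Algebra.adjoin ℤ (Set.range fun p : S × S ↦ κ p.1 p.2)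
  have : Module.Finite ℤ R := Algebra.finite_adjoin_of_finite_of_isIntegral (Set.finite_range _)
    (Set.forall_mem_range.mpr fun p ↦ hint p.1 p.2)
  have hR : ¬ IsField R := fun h ↦ Int.not_isField <|
    isField_of_isIntegral_of_isField (FaithfulSMul.algebraMap_injective ℤ R) h
  let κ' : Matrix S S R := fun s t ↦ ⟨κ s t, Algebra.subset_adjoin ⟨(s, t), rfl⟩⟩
  have hκ' : IsCartanMatrix M κ' := .of_map (φ := (algebraMap R K)) Subtype.val_injective hκ
  have hne' : conjPowEntry κ' s t u D ≠ 0 := fun h ↦ hne <| by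
    rw [show κ = κ'.map (algebraMap R K) from rfl, map_conjPowEntry, h, map_zero]
  obtain ⟨I, _, hI⟩ := exists_ideal_finite_quotient_notMem hR hne'
  refine (hκ'.map (Ideal.Quotient.mk I)).isLargeGroup_artinGroup_of_finite hsu htu hD ?_
  rwa [map_conjPowEntry, Ne, Ideal.Quotient.eq_zero_iff_mem]

end CartanMatrix

theorem exists_pos_forall_dvd {ι : Type*} [Finite ι] (m : ι → ℕ) :
    ∃ D, 0 < D ∧ ∀ i, m i ≠ 0 → m i ∣ D := by
  obtain ⟨B, hB⟩ := (Set.finite_range m).bddAbove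
  exact ⟨B.factorial, B.factorial_pos, fun i hi ↦
    Nat.dvd_factorial (Nat.pos_of_ne_zero hi) (hB ⟨i, rfl⟩)⟩

end Reflections

section CosineMatrix

open Polynomial Polynomial.Chebyshev

theorem aeval_two_mul_cos_dihedralPoly {m : ℕ} (hm : 3 ≤ m) :
    aeval (2 * Real.cos (2 * Real.pi / m)) (dihedralPoly m) = 0 := by
  have hm' : (3 : ℝ) ≤ m := mod_cast hm
  set θ : ℝ := 2 * Real.pi / m with hθ
  have hmθ : m * θ = 2 * Real.pi := by rw [hθ]; field_simp
  have hsin : Real.sin θ ≠ 0 := by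
    have hθ_pos : 0 < θ := by positivity
    exact (Real.sin_pos_of_pos_of_lt_pi hθ_pos (by nlinarith [Real.pi_pos])).ne'
  refine (mul_eq_zero.mp ?_).resolve_right hsin
  obtain ⟨k, rfl | rfl⟩ := Nat.even_or_odd' m <;> push_cast at hmθ
  · have hk : k * θ = Real.pi := by linarith
    rw [aeval_dihedralPoly_two_mul, S_two_mul_real_cos]
    push_cast
    rw [sub_add_cancel, hk, Real.sin_pi]
  · have hk : (k + 1) * θ = 2 * Real.pi - k * θ := by linarith
    rw [aeval_dihedralPoly_two_mul_add_one, add_mul, S_two_mul_real_cos, S_two_mul_real_cos]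
    push_cast
    rw [sub_add_cancel, hk, Real.sin_two_pi_sub, neg_add_cancel]

theorem one_le_eval_S_and_eval_S_le_eval_S_add_one {x : ℝ} (hx : 2 ≤ x) (n : ℕ) :
    1 ≤ (S ℝ n).eval x ∧ (S ℝ n).eval x ≤ (S ℝ (n + 1)).eval x := by
  induction n with
  | zero => simp; linarith
  | succ n ih =>
    have recurrence : (S ℝ (n + 1 + 1)).eval x = x * (S ℝ (n + 1)).eval x - (S ℝ n).eval x := by
      rw [add_assoc, one_add_one_eq_two, S_add_two]
      simp
    push_cast
    exact ⟨ih.1.trans ih.2, by rw [recurrence]; nlinarith⟩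

/- For the label `∞`, encoded by `m = 0`, the junk value `π / 0 = 0` is the correct limit. -/
theorem one_le_two_mul_cos_pi_div {m : ℕ} (hm : m = 0 ∨ 3 ≤ m) :
    1 ≤ 2 * Real.cos (Real.pi / m) := by
  rcases hm with rfl | hm
  · norm_num
  · have hm' : (3 : ℝ) ≤ m := mod_cast hm
    have hcos : Real.cos (Real.pi / 3) ≤ Real.cos (Real.pi / m) := by
      apply Real.cos_le_cos_of_nonneg_of_le_pi (by positivity) (by linarith [Real.pi_pos])
      gcongr
    linarith [Real.cos_pi_div_three]

/-- Twice the Gram matrix of the geometric representation of the Coxeter group of `M`. The entry at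
a pair with label `∞`, encoded by `0`, is `-2` because `π / 0 = 0`. -/
noncomputable def cosMatrix {S : Type*} (M : S → S → ℕ) : Matrix S S ℝ :=
  fun s t ↦ -(2 * Real.cos (Real.pi / M s t))

section

variable {S : Type*} {M : S → S → ℕ}

theorem isIntegral_cosMatrix (M : S → S → ℕ) (s t : S) : IsIntegral ℤ (cosMatrix M s t) := by
  have h := Real.isIntegral_two_mul_cos_rat_mul_pi (1 / M s t)
  rw [cosMatrix, ← one_div_mul_eq_div]
  simpa using h.neg

variable (hM : IsCoxeterMatrix M) (hlarge : ∀ s t, s ≠ t → M s t = 0 ∨ 3 ≤ M s t)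
include hlarge

theorem cosMatrix_le_neg_one {s t : S} (hst : s ≠ t) : cosMatrix M s t ≤ -1 :=
  neg_le_neg (one_le_two_mul_cos_pi_div (hlarge s t hst))

theorem conjPowEntry_cosMatrix_ne_zero {s t u : S} (hst : s ≠ t) (hsu : s ≠ u) (htu : t ≠ u)
    {n : ℕ} (hn : 0 < n) : conjPowEntry (cosMatrix M) s t u n ≠ 0 := by
  have le_neg_two {a b c : S} (hab : a ≠ b) (hac : a ≠ c) (hbc : b ≠ c) :
      cosMatrix M a c - cosMatrix M a b * cosMatrix M b c ≤ -2 := by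
    nlinarith [cosMatrix_le_neg_one hlarge hab, cosMatrix_le_neg_one hlarge hac,
      cosMatrix_le_neg_one hlarge hbc]
  have h₁ := le_neg_two hst hsu htu
  have h₂ := le_neg_two htu.symm hsu.symm hst.symm
  obtain ⟨n, rfl⟩ := Nat.exists_eq_succ_of_ne_zero hn.ne'
  refine mul_ne_zero ?_ (h₂.trans_lt (by norm_num)).ne
  have h₃ : 2 ≤ (cosMatrix M s u - cosMatrix M s t * cosMatrix M t u) *
      (cosMatrix M u s - cosMatrix M u t * cosMatrix M t s) - 2 := by nlinarith
  rw [aeval_S, Nat.cast_succ, add_sub_cancel_right]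
  exact (zero_lt_one.trans_le (one_le_eval_S_and_eval_S_le_eval_S_add_one h₃ n).1).ne'

include hM

theorem isCartanMatrix_cosMatrix : IsCartanMatrix M (cosMatrix M) where
  diag s := by simp [cosMatrix, hM.2.1]
  aeval_dihedralPoly {s t} hst := by
    have hcos : cosMatrix M s t * cosMatrix M t s - 2 = 2 * Real.cos (2 * Real.pi / M s t) := by
      rw [cosMatrix, cosMatrix, hM.1 t s, mul_div_assoc, Real.cos_two_mul]
      ring
    rw [hcos]
    rcases hlarge s t hst with h | h
    · simpa [h] using aeval_dihedralPoly_two_mul 0 (2 : ℝ)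
    · exact aeval_two_mul_cos_dihedralPoly h

variable [Finite S]

theorem isLargeGroup_artinGroup_of_three {s t u : S} (hst : s ≠ t) (hsu : s ≠ u) (htu : t ≠ u) :
    IsLargeGroup (ArtinGroup M) := by
  obtain ⟨D, hD_pos, hD⟩ := exists_pos_forall_dvd fun p : S × S ↦ M p.1 p.2
  exact (isCartanMatrix_cosMatrix hM hlarge).isLargeGroup_artinGroup_of_isIntegral
    (isIntegral_cosMatrix M) hsu htu (fun s t _ ↦ hD (s, t))
    (conjPowEntry_cosMatrix_ne_zero hlarge hst hsu htu hD_pos)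

theorem isLargeGroup_artinGroup [Nontrivial S] : IsLargeGroup (ArtinGroup M) := by
  obtain ⟨s, t, hst⟩ := exists_pair_ne S
  by_cases hS : ∀ u, u = s ∨ u = t
  · exact isLargeGroup_artinGroup_of_pair hM.1 hst hS (hlarge s t hst)
  · push Not at hS
    obtain ⟨u, hus, hut⟩ := hS
    exact isLargeGroup_artinGroup_of_three hM hlarge hst hus.symm hut.symm

end

end CosineMatrix

theorem largeType_freeOfInfinity_hyperbolicType_propertyRInfinity_general
    {S : Type*} [Finite S] [Nontrivial S] (M : S → S → ℕ) (hM : IsCoxeterMatrix M)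
    (hlarge : ∀ s t : S, s ≠ t → M s t = 0 ∨ 3 ≤ M s t) : PropertyRInfinity (ArtinGroup M) :=
  (isLargeGroup_artinGroup hM hlarge).propertyRInfinity

/-- A large-type, free-of-infinity, hyperbolic-type Artin group (on at least 2 generators)
has property `R_∞`. -/
theorem largeType_freeOfInfinity_hyperbolicType_propertyRInfinity
    {S : Type*} [Fintype S] (hcard : 2 ≤ Fintype.card S)
    (M : S → S → ℕ) (hM : IsCoxeterMatrix M)
    (hlarge : ∀ s t : S, s ≠ t → 3 ≤ M s t ∧ M s t ≠ 0)
    (hhyp : ¬ ∃ s t u : S, s ≠ t ∧ t ≠ u ∧ s ≠ u ∧ M s t = 3 ∧ M t u = 3 ∧ M s u = 3) :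
    PropertyRInfinity (ArtinGroup M) := by
  have := Fintype.one_lt_card_iff_nontrivial.mp hcard
  exact largeType_freeOfInfinity_hyperbolicType_propertyRInfinity_general M hM fun s t hst ↦
    .inr (hlarge s t hst).1
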